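/- (Lemma 1) Let q > 1 be an integer and let g : [0,1/2] → ℝ be continuous and differentiable on (0,1/2) with |g|₁ = sup_{t∈(0,1/2)} |g′(t)| < ∞. Then sup_{t∈[0,1/2]} |L_q(g)(t) − g(t)| ≤ ((1 + μ_q)/(4q)) · |g|₁, where μ_q = (1/π) Σ_{j=0}^{q−1} cot((j + 1/2)π/(2q)). -/

import Mathlib

/-- The Chebyshev interpolation nodes on `[0,1/2]`:
`t_k = (cos((2k+1)π/(2q)) + 1)/4`, `k = 0, …, q-1`. -/
noncomputable def chebNode (q : ℕ) (k : Fin q) : ℝ :=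
  (Real.cos ((2 * (k : ℝ) + 1) * Real.pi / (2 * q)) + 1) / 4

/-- The Lagrange–Chebyshev interpolation operator `L_q`: the unique polynomial of
degree at most `q - 1` agreeing with `h` at the `q` Chebyshev nodes on `[0,1/2]`. -/
noncomputable def Lcheb (q : ℕ) (h : ℝ → ℝ) : ℝ → ℝ := fun t =>
  (Lagrange.interpolate (Finset.univ : Finset (Fin q)) (chebNode q)
    (fun k => h (chebNode q k))).eval t

/-- The Lebesgue-type constant `μ_q = (1/π) Σ_{j=0}^{q-1} cot((j+1/2)π/(2q))`. -/
noncomputable def muq (q : ℕ) : ℝ :=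
  (1 / Real.pi) * ∑ j ∈ Finset.range q, Real.cot ((((j : ℝ) + 1 / 2) * Real.pi) / (2 * q))

/-!
Since the Lagrange basis `ℓ_k` sums to `1`, the interpolation error of a `K`-Lipschitz function at
`t` is at most `K ∑ |t - t_k| |ℓ_k t|`. With `P t = T_q (4t - 1)`, which vanishes at every node, and
`D_k` the derivative of `P` at `t_k`, one has `(t - t_k) ℓ_k t = P t / D_k`. Writing
`4 t_k - 1 = cos θ_k`, we have `|P| ≤ 1` on `[0, 1/2]` and `|D_k| = 4q / sin θ_k`, so the error is
at most `K / (4q) ∑ sin θ_k = K / (4q sin θ_0)`.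

It remains to see `1 / sin θ_0 ≤ 1 + μ_q`. As `cot (θ / 2) + tan (θ / 2) = 2 / sin θ`, averaging the
sum that defines `μ_q` with its reflection gives `π μ_q = ∑ 1 / sin θ_k`. Here the two extreme terms
are `1 / sin θ_0` and the other `q - 2` are at least `1`, while `(π - 2) / sin θ_0 ≤ q`.
-/

section LagrangeInterpolation

open Polynomial Lagrange

variable {F ι : Type*} [Field F] {s : Finset ι} {v : ι → F} {i : ι}

theorem eq_C_coeff_mul_nodal {P : F[X]} (hv : Set.InjOn v s) (hdeg : P.natDegree ≤ s.card)
    (hroot : ∀ j ∈ s, P.eval (v j) = 0) : P = C (P.coeff s.card) * nodal s v := by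
  refine eq_of_degree_sub_lt_of_eval_index_eq s hv ?_ fun j hj => ?_
  · refine (degree_lt_iff_coeff_zero _ _).2 fun m hm => ?_
    rcases hm.eq_or_lt with rfl | hlt
    · have hmonic : (nodal s v).coeff s.card = 1 := by
        simpa only [Monic, leadingCoeff, natDegree_nodal] using nodal_monic (s := s) (v := v)
      rw [coeff_sub, coeff_C_mul, hmonic, mul_one, sub_self]
    · rw [coeff_sub, coeff_C_mul, coeff_eq_zero_of_natDegree_lt (hdeg.trans_lt hlt),
        coeff_eq_zero_of_natDegree_lt (natDegree_nodal.trans_lt hlt), mul_zero, sub_zero]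
  · rw [hroot j hj, eval_mul, eval_nodal_at_node hj, mul_zero]

variable [DecidableEq ι]

theorem sub_mul_eval_basis (hi : i ∈ s) (t : F) :
    (t - v i) * (Lagrange.basis s v i).eval t = nodalWeight s v i * (nodal s v).eval t := by
  rw [basis_eq_prod_sub_inv_mul_nodal_div hi, ← nodal_erase_eq_nodal_div hi,
    nodal_eq_mul_nodal_erase hi]
  simp only [eval_mul, eval_sub, eval_X, eval_C]
  ring

theorem eval_derivative_mul_sub_mul_eval_basis {P : F[X]} (hv : Set.InjOn v s)
    (hdeg : P.natDegree ≤ s.card) (hroot : ∀ j ∈ s, P.eval (v j) = 0) (hi : i ∈ s) (t : F) :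
    P.derivative.eval (v i) * ((t - v i) * (Lagrange.basis s v i).eval t) = P.eval t := by
  have hw : (nodal s v).derivative.eval (v i) * nodalWeight s v i = 1 := by
    have hne := nodalWeight_ne_zero hv hi
    rw [nodalWeight_eq_eval_derivative_nodal hi] at hne ⊢
    exact mul_inv_cancel₀ fun h => hne (by rw [h, inv_zero])
  rw [eq_C_coeff_mul_nodal hv hdeg hroot, sub_mul_eval_basis hi, derivative_C_mul]
  simp only [eval_mul, eval_C]
  linear_combination P.coeff s.card * (nodal s v).eval t * hw

theorem eval_interpolate_sub (hv : Set.InjOn v s) (hs : s.Nonempty) (r : ι → F) (c t : F) :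
    (interpolate s v r).eval t - c = ∑ i ∈ s, (r i - c) * (Lagrange.basis s v i).eval t := by
  have hsum : ∑ i ∈ s, (Lagrange.basis s v i).eval t = 1 := by
    rw [← eval_finsetSum, sum_basis hv hs, eval_one]
  simp only [interpolate_apply, eval_finsetSum, eval_mul, eval_C, sub_mul,
    Finset.sum_sub_distrib, ← Finset.mul_sum, hsum, mul_one]

theorem abs_eval_interpolate_sub_le {v : ι → ℝ} {f : ℝ → ℝ} {K : NNReal} {A : Set ℝ}
    (hf : LipschitzOnWith K f A) (hv : Set.InjOn v s) (hs : s.Nonempty) (hvA : ∀ i ∈ s, v i ∈ A)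
    {t : ℝ} (ht : t ∈ A) :
    |(interpolate s v fun i => f (v i)).eval t - f t| ≤
      K * ∑ i ∈ s, |(t - v i) * (Lagrange.basis s v i).eval t| := by
  rw [eval_interpolate_sub hv hs, Finset.mul_sum]
  refine (Finset.abs_sum_le_sum_abs _ _).trans (Finset.sum_le_sum fun i hi => ?_)
  have hlip : |f (v i) - f t| ≤ K * |t - v i| := by
    simpa only [Real.dist_eq, abs_sub_comm t] using hf.dist_le_mul _ (hvA i hi) _ ht
  rw [abs_mul, abs_mul, ← mul_assoc]
  gcongr

end LagrangeInterpolation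

section ChebyshevNodes

open Polynomial Real

theorem eval_derivative_T_cos_mul_sin (n : ℤ) (θ : ℝ) :
    (Chebyshev.T ℝ n).derivative.eval (cos θ) * sin θ = n * sin (n * θ) := by
  have hU := Chebyshev.U_real_cos θ (n - 1)
  rw [Int.cast_sub, Int.cast_one, sub_add_cancel] at hU
  rw [Chebyshev.T_derivative_eq_U, eval_mul, eval_intCast, mul_assoc, hU]

/-- The angle `θ_k = (2k + 1)π / (2q)` of the `k`-th Chebyshev node. It is defined for every natural
number `k`, and lies in `(0, π)` when `k < q`. -/
noncomputable def chebAngle (q k : ℕ) : ℝ := (2 * k + 1) * π / (2 * q)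

theorem chebNode_eq (q : ℕ) (k : Fin q) : chebNode q k = (cos (chebAngle q k) + 1) / 4 := rfl

theorem chebAngle_zero (q : ℕ) : chebAngle q 0 = π / (2 * q) := by simp [chebAngle]

variable {q k : ℕ}

theorem mul_chebAngle (hq : q ≠ 0) : q * chebAngle q k = k * π + π / 2 := by
  rw [chebAngle]
  field_simp

theorem chebAngle_reflect (hk : k < q) : chebAngle q (q - 1 - k) = π - chebAngle q k := by
  have hq : (q : ℝ) ≠ 0 := by norm_cast; lia
  have hcast : ((q - 1 - k : ℕ) : ℝ) = q - 1 - k := by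
    rw [Nat.sub_sub, Nat.cast_sub (by lia)]
    push_cast
    ring
  rw [chebAngle, chebAngle, hcast]
  field_simp
  ring

theorem chebAngle_pos (hq : q ≠ 0) : 0 < chebAngle q k := by
  rw [chebAngle]
  positivity

theorem chebAngle_lt_pi (hk : k < q) : chebAngle q k < π := by
  have hpos : 0 < chebAngle q (q - 1 - k) := chebAngle_pos (by lia)
  rw [chebAngle_reflect hk] at hpos
  linarith

theorem sin_chebAngle_pos (hk : k < q) : 0 < sin (chebAngle q k) :=
  sin_pos_of_pos_of_lt_pi (chebAngle_pos (by lia)) (chebAngle_lt_pi hk)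

theorem sum_sin_chebAngle (hq : q ≠ 0) :
    ∑ k ∈ Finset.range q, sin (chebAngle q k) = 1 / sin (π / (2 * q)) := by
  have hsum := sin_mul_sum_sin q (π / q) (π / (2 * q))
  have hstep : π / q / 2 = π / (2 * q) := by ring
  have hleft : q * (π / q) / 2 = π / 2 := by field_simp
  have hright : (q - 1) * (π / q) / 2 + π / (2 * q) = π / 2 := by field_simp; ring
  have hangle (k : ℕ) : π / q * k + π / (2 * q) = chebAngle q k := by rw [chebAngle]; ring
  simp only [hstep, hleft, hright, hangle, sin_pi_div_two, mul_one] at hsum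
  have hsin : sin (π / (2 * q)) ≠ 0 := by
    simpa only [chebAngle_zero] using (sin_chebAngle_pos (Nat.pos_of_ne_zero hq)).ne'
  rwa [eq_div_iff hsin, mul_comm]

theorem chebNode_mem_Icc (k : Fin q) : chebNode q k ∈ Set.Icc (0 : ℝ) (1 / 2) := by
  have hcos := cos_mem_Icc (chebAngle q k)
  rw [chebNode_eq]
  constructor <;> linarith [hcos.1, hcos.2]

theorem chebNode_injective (q : ℕ) : Function.Injective (chebNode q) := by
  intro i j hij
  have hangle_mem (k : Fin q) : chebAngle q k ∈ Set.Icc 0 π :=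
    ⟨(chebAngle_pos k.pos.ne').le, (chebAngle_lt_pi k.2).le⟩
  have hcos : cos (chebAngle q i) = cos (chebAngle q j) := by
    rw [chebNode_eq, chebNode_eq] at hij
    linarith
  have hangle := injOn_cos (hangle_mem i) (hangle_mem j) hcos
  have hmul : (i : ℝ) * π = j * π := by
    have hi := mul_chebAngle (k := i) i.pos.ne'
    rw [hangle, mul_chebAngle j.pos.ne'] at hi
    linarith
  exact Fin.ext (by exact_mod_cast mul_right_cancel₀ pi_ne_zero hmul)

/-- The Chebyshev polynomial `T_q (4t - 1)` of the interval `[0, 1/2]`, a multiple of the nodal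
polynomial of the nodes `chebNode q`. -/
noncomputable def shiftedChebyshev (q : ℕ) : ℝ[X] := (Chebyshev.T ℝ q).comp (C 4 * X - C 1)

theorem natDegree_shiftedChebyshev (q : ℕ) : (shiftedChebyshev q).natDegree = q := by
  have hlin : (C (4 : ℝ) * X - C 1).natDegree = 1 := by compute_degree!
  rw [shiftedChebyshev, natDegree_comp, Chebyshev.natDegree_T, hlin, mul_one, Int.natAbs_natCast]

theorem eval_shiftedChebyshev (q : ℕ) (t : ℝ) :
    (shiftedChebyshev q).eval t = (Chebyshev.T ℝ q).eval (4 * t - 1) := by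
  simp [shiftedChebyshev]

theorem four_mul_chebNode_sub_one (k : Fin q) : 4 * chebNode q k - 1 = cos (chebAngle q k) := by
  rw [chebNode_eq]
  ring

theorem eval_shiftedChebyshev_chebNode (k : Fin q) :
    (shiftedChebyshev q).eval (chebNode q k) = 0 := by
  rw [eval_shiftedChebyshev, four_mul_chebNode_sub_one, Chebyshev.T_real_cos, Int.cast_natCast,
    mul_chebAngle k.pos.ne', cos_add_pi_div_two, sin_nat_mul_pi, neg_zero]

theorem abs_eval_shiftedChebyshev_le_one (q : ℕ) {t : ℝ} (ht : t ∈ Set.Icc (0 : ℝ) (1 / 2)) :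
    |(shiftedChebyshev q).eval t| ≤ 1 := by
  rw [eval_shiftedChebyshev]
  exact Chebyshev.abs_eval_T_real_le_one q (abs_le.2 ⟨by linarith [ht.1], by linarith [ht.2]⟩)

theorem abs_eval_derivative_shiftedChebyshev_mul_sin (k : Fin q) :
    |(shiftedChebyshev q).derivative.eval (chebNode q k)| * sin (chebAngle q k) = 4 * q := by
  have hderiv : (shiftedChebyshev q).derivative.eval (chebNode q k) =
      4 * (Chebyshev.T ℝ q).derivative.eval (cos (chebAngle q k)) := by
    simp [shiftedChebyshev, derivative_comp, four_mul_chebNode_sub_one]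
  have hT := eval_derivative_T_cos_mul_sin q (chebAngle q k)
  rw [Int.cast_natCast, mul_chebAngle k.pos.ne', sin_add_pi_div_two] at hT
  rw [← abs_of_pos (sin_chebAngle_pos k.2), ← abs_mul, hderiv, mul_assoc, hT, abs_mul, abs_mul,
    Nat.abs_cast, Nat.abs_ofNat, ← Int.cast_natCast (k : ℕ), abs_cos_int_mul_pi, mul_one]

theorem abs_sub_mul_eval_basis_chebNode_le (k : Fin q) {t : ℝ}
    (ht : t ∈ Set.Icc (0 : ℝ) (1 / 2)) :
    |(t - chebNode q k) * (Lagrange.basis Finset.univ (chebNode q) k).eval t| ≤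
      sin (chebAngle q k) / (4 * q) := by
  set b := (t - chebNode q k) * (Lagrange.basis Finset.univ (chebNode q) k).eval t
  have hq : (0 : ℝ) < q := by exact_mod_cast k.pos
  have hsin := sin_chebAngle_pos k.2
  have hbasis : (shiftedChebyshev q).derivative.eval (chebNode q k) * b =
      (shiftedChebyshev q).eval t :=
    eval_derivative_mul_sub_mul_eval_basis (chebNode_injective q).injOn
      (by simp [natDegree_shiftedChebyshev]) (fun j _ => eval_shiftedChebyshev_chebNode j)
      (Finset.mem_univ k) t
  rw [le_div_iff₀ (by positivity)]
  calc |b| * (4 * q) = |(shiftedChebyshev q).eval t| * sin (chebAngle q k) := by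
        rw [← hbasis, abs_mul _ b, ← abs_eval_derivative_shiftedChebyshev_mul_sin k]
        ring
    _ ≤ 1 * sin (chebAngle q k) := by gcongr; exact abs_eval_shiftedChebyshev_le_one q ht
    _ = sin (chebAngle q k) := one_mul _

theorem abs_Lcheb_sub_le (hq : q ≠ 0) {g : ℝ → ℝ} {K : NNReal}
    (hg : LipschitzOnWith K g (Set.Icc 0 (1 / 2))) {t : ℝ} (ht : t ∈ Set.Icc (0 : ℝ) (1 / 2)) :
    |Lcheb q g t - g t| ≤ 1 / sin (π / (2 * q)) / (4 * q) * K := by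
  have hne : (Finset.univ : Finset (Fin q)).Nonempty := ⟨⟨0, by lia⟩, Finset.mem_univ _⟩
  calc |Lcheb q g t - g t|
      ≤ K * ∑ k, |(t - chebNode q k) * (Lagrange.basis Finset.univ (chebNode q) k).eval t| :=
        abs_eval_interpolate_sub_le hg (chebNode_injective q).injOn hne
          (fun k _ => chebNode_mem_Icc k) ht
    _ ≤ K * ∑ k : Fin q, sin (chebAngle q k) / (4 * q) := by
        gcongr with k
        exact abs_sub_mul_eval_basis_chebNode_le k ht
    _ = 1 / sin (π / (2 * q)) / (4 * q) * K := by
        rw [Fin.sum_univ_eq_sum_range (fun k => sin (chebAngle q k) / (4 * q)), ← Finset.sum_div,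
          sum_sin_chebAngle hq, mul_comm]

end ChebyshevNodes

section LebesgueConstant

open Real

theorem cot_add_cot_pi_div_two_sub (x : ℝ) : cot x + cot (π / 2 - x) = 2 / sin (2 * x) := by
  rw [cot_eq_cos_div_sin, cot_eq_cos_div_sin, cos_pi_div_two_sub, sin_pi_div_two_sub, sin_two_mul]
  rcases eq_or_ne (sin x) 0 with hsin | hsin
  · simp [hsin]
  rcases eq_or_ne (cos x) 0 with hcos | hcos
  · simp [hcos]
  field_simp
  exact cos_sq_add_sin_sq x

variable {q : ℕ}

theorem sum_cot_half_chebAngle (q : ℕ) :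
    ∑ j ∈ Finset.range q, cot (chebAngle q j / 2) =
      ∑ j ∈ Finset.range q, 1 / sin (chebAngle q j) := by
  have hreflect := Finset.sum_range_reflect (fun j => cot (chebAngle q j / 2)) q
  have hpair : ∑ j ∈ Finset.range q, (cot (chebAngle q j / 2) + cot (chebAngle q (q - 1 - j) / 2)) =
      2 * ∑ j ∈ Finset.range q, 1 / sin (chebAngle q j) := by
    rw [Finset.mul_sum]
    refine Finset.sum_congr rfl fun j hj => ?_
    rw [chebAngle_reflect (Finset.mem_range.1 hj), sub_div, cot_add_cot_pi_div_two_sub,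
      mul_div_cancel₀ _ two_ne_zero, mul_one_div]
  rw [Finset.sum_add_distrib, hreflect] at hpair
  linarith

theorem pi_mul_muq (q : ℕ) : π * muq q = ∑ j ∈ Finset.range q, 1 / sin (chebAngle q j) := by
  have hangle (j : ℕ) : ((j : ℝ) + 1 / 2) * π / (2 * q) = chebAngle q j / 2 := by
    rw [chebAngle]
    ring
  simp only [muq, hangle, sum_cot_half_chebAngle]
  field_simp

theorem two_div_sin_add_le_sum_one_div_sin_chebAngle (hq : 1 < q) :
    2 / sin (π / (2 * q)) + (q - 2) ≤ ∑ j ∈ Finset.range q, 1 / sin (chebAngle q j) := by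
  have hlast : chebAngle q (q - 1) = π - chebAngle q 0 := chebAngle_reflect (k := 0) (by lia)
  have hterm (j : ℕ) (hj : j ∈ Finset.range q) : 0 ≤ 1 / sin (chebAngle q j) - 1 := by
    rw [sub_nonneg, le_div_iff₀ (sin_chebAngle_pos (Finset.mem_range.1 hj)), one_mul]
    exact sin_le_one _
  have hends := Finset.add_le_sum (i := 0) (j := q - 1) hterm (Finset.mem_range.2 (by lia))
    (Finset.mem_range.2 (by lia)) (by lia)
  rw [hlast, sin_pi_sub, chebAngle_zero, Finset.sum_sub_distrib] at hends
  simp only [Finset.sum_const, Finset.card_range, nsmul_eq_mul, mul_one] at hends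
  linarith [add_div 1 1 (sin (π / (2 * q)))]

theorem pi_sub_two_div_sin_le (hq : 1 < q) : (π - 2) / sin (π / (2 * q)) ≤ q := by
  set x := π / (2 * q) with hx
  have hq2 : (2 : ℝ) ≤ q := by exact_mod_cast hq
  have hxq : q * x = π / 2 := by rw [hx]; field_simp
  have hx0 : 0 < x := by positivity
  have hx1 : x ≤ 1 := by nlinarith [pi_le_four]
  have hsin : 5 / 6 * x ≤ sin x := by
    nlinarith [sin_ge_sub_cube hx0.le, mul_nonneg hx0.le (sub_nonneg.2 hx1)]
  rw [div_le_iff₀ (by linarith)]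
  calc π - 2 ≤ 5 / 6 * (π / 2) := by linarith [pi_lt_d2]
    _ = q * (5 / 6 * x) := by rw [← hxq]; ring
    _ ≤ q * sin x := by gcongr

theorem one_div_sin_le_one_add_muq (hq : 1 < q) : 1 / sin (π / (2 * q)) ≤ 1 + muq q := by
  have hpi : π * (1 / sin (π / (2 * q))) ≤ π * (1 + muq q) := by
    calc π * (1 / sin (π / (2 * q)))
        = 2 / sin (π / (2 * q)) + (π - 2) / sin (π / (2 * q)) := by ring
      _ ≤ 2 / sin (π / (2 * q)) + q := by gcongr; exact pi_sub_two_div_sin_le hq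
      _ ≤ 2 + π * muq q := by
          linarith [pi_mul_muq q, two_div_sin_add_le_sum_one_div_sin_chebAngle hq]
      _ ≤ π * (1 + muq q) := by linarith [two_le_pi]
  exact le_of_mul_le_mul_left hpi pi_pos

end LebesgueConstant

/-- Lemma 1: for an integer `q > 1` and a continuous
`g : [0,1/2] → ℝ` differentiable on `(0,1/2)` with `|g'| ≤ B` there,
`sup_{[0,1/2]} |L_q(g) - g| ≤ ((1 + μ_q)/(4q)) B`. -/
theorem lagrange_chebyshev_error_bound
    (q : ℕ) (hq : 1 < q) (g : ℝ → ℝ) (B : ℝ)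
    (hgc : ContinuousOn g (Set.Icc 0 (1 / 2)))
    (hg : ∀ t ∈ Set.Ioo (0 : ℝ) (1 / 2), DifferentiableAt ℝ g t ∧ |deriv g t| ≤ B) :
    ∀ t ∈ Set.Icc (0 : ℝ) (1 / 2),
      |Lcheb q g t - g t| ≤ ((1 + muq q) / (4 * q)) * B := by
  intro t ht
  have hB : 0 ≤ B := (abs_nonneg _).trans (hg (1 / 4) ⟨by norm_num, by norm_num⟩).2
  lift B to NNReal using hB
  have hclosure : closure (Set.Ioo (0 : ℝ) (1 / 2)) = Set.Icc 0 (1 / 2) :=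
    closure_Ioo (by norm_num)
  have hlip : LipschitzOnWith B g (Set.Icc 0 (1 / 2)) := by
    rw [← hclosure] at hgc ⊢
    exact LipschitzOnWith.closure hgc <| (convex_Ioo _ _).lipschitzOnWith_of_nnnorm_deriv_le
      (fun x hx => (hg x hx).1) fun x hx => (hg x hx).2
  calc |Lcheb q g t - g t| ≤ 1 / Real.sin (Real.pi / (2 * q)) / (4 * q) * B :=
        abs_Lcheb_sub_le (by lia) hlip ht
    _ ≤ (1 + muq q) / (4 * q) * B := by gcongr; exact one_div_sin_le_one_add_muq hq
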